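/- arXiv:math/0506379 — 2 statements merged into one kernel-verified Lean document; each statement's English description precedes it below -/
import Mathlib

section
/- A family 𝓕 of F_σ subsets of X is 𝒦^ℕ-residual if and only if it is 𝒦↗^ℕ-residual. That is, the set 𝒦_𝓕^ℕ = {(K_n) ∈ 𝒦^ℕ : ⋃_{n=1}^∞ K_n ∈ 𝓕} is residual in 𝒦^ℕ if and only if 𝒦_𝓕^ℕ ∩ 𝒦↗^ℕ is residual in the subspace 𝒦↗^ℕ of increasing sequences. -/
open TopologicalSpace Topology

/-!
Two Banach–Mazur games, on the space of all sequences `K` of closed sets and on the space of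
increasing sequences `L`, are played simultaneously in such a way that the limits `K` and `L` of
every joint play have the same union. Either game can be steered through a given sequence of dense
open sets, while the joint plays still reach a residual set of limits in the other space. Hence a
set which only depends on the union is residual in one space if and only if it is in the other.

A joint position consists of finitely many closed sets, the centers, whose neighbourhoods have
pairwise finite intersections, and which carry labels. The `i`-th center approximates `K i`, and the
union of the centers with label at most `j` approximates `L j`, so that `K i` is contained in `L j`
for the label `j` of `i`. Conversely, let `x` be a point of `L j`. If `x` is isolated, a good enough
approximation puts it into some `K i`. Otherwise, at every late stage it lies in exactly one of the
neighbourhoods with label at most `j`. New centers which enter an already approximated term of `L`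
have to stay near centers of smaller labels, so whenever `x` leaves a neighbourhood it passes to one
with a larger label. This happens only finitely often, and `x` belongs to `K i` for the index `i` of
the neighbourhood in which it finally stays.
-/

section Residual

variable {P Y Z : Type*} [TopologicalSpace Y] [TopologicalSpace Z]

lemma compl_frontier_mem_residual {U : Set Y} (hU : IsOpen U) :
    (frontier U)ᶜ ∈ residual Y :=
  residual_of_dense_open isClosed_frontier.isOpen_compl <|
    interior_eq_empty_iff_dense_compl.1 (frontier_compl U ▸ interior_frontier hU.isClosed_compl)

lemma exists_countable_subset_closure_biUnion [SecondCountableTopology Z] {W : P → Set Z}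
    (hW : ∀ p, IsOpen (W p)) {O : Set Z} (hO : IsOpen O) {S : Set P}
    (hS : ∀ V ⊆ O, IsOpen V → V.Nonempty → ∃ q ∈ S, (W q).Nonempty ∧ W q ⊆ V) :
    ∃ Q ⊆ S, Q.Countable ∧ O ⊆ closure (⋃ q ∈ Q, W q) := by
  obtain ⟨Q, hQS, hQ, hunion⟩ := isOpen_biUnion_countable S W fun p _ => hW p
  refine ⟨Q, hQS, hQ, fun z hz => mem_closure_iff.2 fun V hV hzV => ?_⟩
  obtain ⟨q, hqS, ⟨y, hy⟩, hqV⟩ :=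
    hS (V ∩ O) Set.inter_subset_right (hV.inter hO) ⟨z, hzV, hz⟩
  exact ⟨y, (hqV hy).1, hunion ▸ Set.mem_biUnion hqS hy⟩

/- Below each position, countably many continuations have dense union. This gives a countable tree
of positions, and a point outside countably many frontiers can be followed through it. -/
theorem mem_residual_of_forall_branch [SecondCountableTopology Z] {W : P → Set Z}
    (hW : ∀ p, IsOpen (W p)) {R : ℕ → P → P → Prop}
    (hR : ∀ n p, ∀ V ⊆ W p, IsOpen V → V.Nonempty → ∃ q, R n p q ∧ (W q).Nonempty ∧ W q ⊆ V)
    {root : P} (hroot : W root = Set.univ) {B : Set Z}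
    (hB : ∀ s : ℕ → P, (∀ n, R n (s n) (s (n + 1))) → ∀ z, (∀ n, z ∈ W (s n)) → z ∈ B) :
    B ∈ residual Z := by
  choose Q hQR hQ hWQ using fun n p =>
    exists_countable_subset_closure_biUnion hW (hW p) (S := {q | R n p q}) (hR n p)
  let T : ℕ → Set P := fun n => Nat.rec {root} (fun n T => ⋃ p ∈ T, Q n p) n
  have hT : ∀ n, (T n).Countable := fun n => by
    induction n with
    | zero => exact Set.countable_singleton root
    | succ n ih => exact ih.biUnion fun p _ => hQ n p
  have hfrontier : (⋂ n, ⋂ p ∈ T n, (frontier (⋃ q ∈ Q n p, W q))ᶜ) ∈ residual Z :=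
    countable_iInter_mem.2 fun n => (countable_bInter_mem (hT n)).2 fun p _ =>
      compl_frontier_mem_residual (isOpen_biUnion fun q _ => hW q)
  filter_upwards [hfrontier] with z hz
  have hsucc : ∀ n p, p ∈ T n ∧ z ∈ W p → ∃ q, R n p q ∧ q ∈ T (n + 1) ∧ z ∈ W q := by
    rintro n p ⟨hp, hzp⟩
    have hzQ : z ∈ ⋃ q ∈ Q n p, W q := by
      by_contra hzQ
      refine Set.mem_iInter₂.1 (Set.mem_iInter.1 hz n) p hp ⟨hWQ n p hzp, ?_⟩
      rwa [(isOpen_biUnion fun q _ => hW q).interior_eq]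
    obtain ⟨q, hq, hzq⟩ := Set.mem_iUnion₂.1 hzQ
    exact ⟨q, hQR n p hq, Set.mem_biUnion hp hq, hzq⟩
  choose! next hnextR hnextT using hsucc
  let s : ℕ → P := fun n => Nat.rec root next n
  have hs : ∀ n, s n ∈ T n ∧ z ∈ W (s n) := fun n => by
    induction n with
    | zero => exact ⟨rfl, hroot ▸ Set.mem_univ z⟩
    | succ n ih => exact hnextT n _ ih
  exact hB s (fun n => hnextR n _ (hs n)) z fun n => (hs n).2

lemma exists_forall_mem_of_closure_subset [CompactSpace Y] {W : ℕ → Set Y}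
    (hne : ∀ n, (W n).Nonempty) (hW : ∀ n, closure (W (n + 1)) ⊆ W n) : ∃ y, ∀ n, y ∈ W n := by
  obtain ⟨y, hy⟩ := IsCompact.nonempty_iInter_of_sequence_nonempty_isCompact_isClosed
    (fun n => closure (W n)) (fun n => (hW n).trans subset_closure) (fun n => (hne n).closure)
    isClosed_closure.isCompact fun _ => isClosed_closure
  exact ⟨y, fun n => hW n (Set.mem_iInter.1 hy (n + 1))⟩

lemma exists_isOpen_dense_iInter_subset [BaireSpace Y] {A : Set Y} (hA : A ∈ residual Y) :
    ∃ D : ℕ → Set Y, (∀ n, IsOpen (D n)) ∧ (∀ n, Dense (D n)) ∧ ⋂ n, D n ⊆ A := by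
  obtain ⟨G, hGA, hG, hGdense⟩ := mem_residual.1 hA
  obtain ⟨D, hD, rfl⟩ := isGδ_iff_eq_iInter_nat.1 hG
  exact ⟨D, hD, fun n => hGdense.mono (Set.iInter_subset D n), hGA⟩

variable {R : P → P → Prop}

/-- `W` assigns to each position of a Banach–Mazur type game a nonempty open set. Here `R p q` says
that `q` is an admissible continuation of `p`. Continuations shrink the closures of these sets, and
every nonempty open subset of `W p` can be reached by a single continuation. -/
structure IsBanachMazurScheme (R : P → P → Prop) (W : P → Set Y) : Prop where
  isOpen : ∀ p, IsOpen (W p)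
  nonempty : ∀ p, (W p).Nonempty
  closure_subset : ∀ {p q}, R p q → closure (W q) ⊆ W p
  exists_subset : ∀ p, ∀ V ⊆ W p, IsOpen V → V.Nonempty → ∃ q, R p q ∧ W q ⊆ V

theorem IsBanachMazurScheme.mem_residual_of_mem_residual [IsTrans P R]
    [CompactSpace Y] [T2Space Y] [SecondCountableTopology Z] {U : P → Set Y} {W : P → Set Z}
    (hU : IsBanachMazurScheme R U) (hW : IsBanachMazurScheme R W)
    {root : P} (hroot : W root = Set.univ) {A : Set Y} {B : Set Z}
    (hAB : ∀ s : ℕ → P, (∀ n, R (s n) (s (n + 1))) →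
      ∀ y ∈ ⋂ n, U (s n), ∀ z ∈ ⋂ n, W (s n), y ∈ A → z ∈ B)
    (hA : A ∈ residual Y) : B ∈ residual Z := by
  obtain ⟨D, hD, hDdense, hDA⟩ := exists_isOpen_dense_iInter_subset hA
  refine mem_residual_of_forall_branch hW.isOpen (R := fun n p q => R p q ∧ U q ⊆ D n)
    (fun n p V hVp hV hVne => ?_) hroot fun s hs z hz => ?_
  · obtain ⟨q, hpq, hqV⟩ := hW.exists_subset p V hVp hV hVne
    obtain ⟨r, hqr, hrD⟩ := hU.exists_subset q (U q ∩ D n) Set.inter_subset_left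
      ((hU.isOpen q).inter (hD n)) ((hDdense n).inter_open_nonempty _ (hU.isOpen q) (hU.nonempty q))
    exact ⟨r, ⟨_root_.trans hpq hqr, hrD.trans Set.inter_subset_right⟩, hW.nonempty r,
      (subset_closure.trans (hW.closure_subset hqr)).trans hqV⟩
  · obtain ⟨y, hy⟩ := exists_forall_mem_of_closure_subset (fun n => hU.nonempty (s n))
      fun n => hU.closure_subset (hs n).1
    refine hAB s (fun n => (hs n).1) y (Set.mem_iInter.2 hy) z (Set.mem_iInter.2 hz) (hDA ?_)
    exact Set.mem_iInter.2 fun n => (hs n).2 (hy (n + 1))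

end Residual

section Topology

variable {ι Y : Type*}

lemma isClosed_setOf_monotone [Preorder ι] [SemilatticeSup Y] [TopologicalSpace Y]
    [ContinuousSup Y] [T2Space Y] : IsClosed {f : ι → Y | Monotone f} := by
  have hsup : {f : ι → Y | Monotone f} = ⋂ (i) (j) (_ : i ≤ j), {f | f i ⊔ f j = f j} := by
    ext f
    simp [Monotone]
  rw [hsup]
  exact isClosed_iInter fun i => isClosed_iInter fun j => isClosed_iInter fun _ =>
    isClosed_eq ((continuous_apply i).sup (continuous_apply j)) (continuous_apply j)

instance [Preorder ι] [SemilatticeSup Y] [TopologicalSpace Y] [ContinuousSup Y] [T2Space Y]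
    [CompactSpace Y] : CompactSpace {f : ι → Y // Monotone f} :=
  isCompact_iff_compactSpace.1 isClosed_setOf_monotone.isCompact

lemma exists_pi_Iio_subset [TopologicalSpace Y] {O : Set (ℕ → Y)} (hO : IsOpen O) {a : ℕ → Y}
    (ha : a ∈ O) :
    ∃ (n : ℕ) (u : ℕ → Set Y), (∀ i, IsOpen (u i) ∧ a i ∈ u i) ∧ (Set.Iio n).pi u ⊆ O := by
  classical
  obtain ⟨I, u, hu, huO⟩ := isOpen_pi_iff.1 hO a ha
  obtain ⟨n, hn⟩ := I.bddAbove
  refine ⟨n + 1, fun i => if i ∈ I then u i else Set.univ, fun i => ?_, fun f hf =>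
    huO fun i hi => ?_⟩
  · dsimp only
    split_ifs with hi
    exacts [hu i hi, ⟨isOpen_univ, Set.mem_univ _⟩]
  · simpa [Finset.mem_coe.1 hi] using hf i (Nat.lt_succ_of_le (hn hi))

lemma isClosed_inter_of_pairwise_finite_inter [TopologicalSpace Y] [T1Space Y] {C : Set Y}
    (hC : IsClosed C) {s : Set ι} {G : ι → Set Y} (hG : ∀ i ∈ s, IsOpen (G i))
    (hfin : s.Pairwise fun i j => (G i ∩ G j).Finite) (hCG : C ⊆ ⋃ i ∈ s, G i) {i : ι}
    (hi : i ∈ s) : IsClosed (C ∩ G i) := by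
  have hopen : ∀ j ∈ s, IsOpen (G j \ G i) := fun j hj => by
    by_cases hji : j = i
    · simp [hji]
    · rw [← Set.sdiff_self_inter]
      exact (hG j hj).sdiff (hfin hj hi hji).isClosed
  convert hC.sdiff (isOpen_biUnion hopen) using 1
  refine Set.Subset.antisymm (fun x hx => ⟨hx.1, ?_⟩) fun x hx => ⟨hx.1, ?_⟩
  · simp only [Set.mem_iUnion, not_exists]
    exact fun j _ hxj => hxj.2 hx.2
  · obtain ⟨j, hj, hxj⟩ := Set.mem_iUnion₂.1 (hCG hx.1)
    by_contra hxi
    exact hx.2 (Set.mem_biUnion hj ⟨hxj, hxi⟩)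

lemma dense_compl_of_finite_of_not_isOpen_singleton [TopologicalSpace Y] [T1Space Y] {S : Set Y}
    (hS : S.Finite) (hSopen : ∀ x ∈ S, ¬IsOpen {x}) : Dense Sᶜ := by
  refine interior_eq_empty_iff_dense_compl.1 (Set.eq_empty_of_forall_notMem fun x hx => ?_)
  exact hSopen x (interior_subset hx)
    (isOpen_singleton_of_finite_mem_nhds x (mem_interior_iff_mem_nhds.1 hx) hS)

end Topology

section Metric

open Filter Metric

variable {Y : Type*} [PseudoEMetricSpace Y]

lemma eventually_closure_eball_subset {x : Y} {U : Set Y} (hU : U ∈ 𝓝 x) :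
    ∀ᶠ e : ℝ in 𝓝[>] 0, closure (eball x (ENNReal.ofReal e)) ⊆ U := by
  obtain ⟨r, hr, hrU⟩ := nhds_basis_closedEBall.mem_iff.1 hU
  have hlim : Tendsto ENNReal.ofReal (𝓝[>] 0) (𝓝 0) :=
    (ENNReal.continuous_ofReal.tendsto' 0 0 ENNReal.ofReal_zero).mono_left nhdsWithin_le_nhds
  filter_upwards [hlim.eventually_lt_const hr] with e he
  exact (closure_minimal (eball_subset_closedEBall.trans (closedEBall_subset_closedEBall he.le))
    isClosed_closedEBall).trans hrU

variable {X : Type*} [MetricSpace X]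

lemma eventually_thickening_subset {K U : Set X} (hK : IsCompact K) (hU : IsOpen U)
    (hKU : K ⊆ U) : ∀ᶠ e : ℝ in 𝓝[>] 0, thickening e K ⊆ U := by
  obtain ⟨d, hd, hdU⟩ := hK.exists_thickening_subset_open hU hKU
  filter_upwards [Ioo_mem_nhdsGT hd] with e he
  exact (thickening_mono he.2.le K).trans hdU

lemma mem_of_eventually_mem_thickening {ι : Type*} {l : Filter ι} [l.NeBot] {r : ι → ℝ}
    (hr : Tendsto r l (𝓝 0)) {C : Set X} (hC : IsClosed C) {x : X}
    (hx : ∀ᶠ n in l, x ∈ thickening (r n) C) : x ∈ C := by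
  refine hC.closure_subset (Metric.mem_closure_iff.2 fun e he => ?_)
  obtain ⟨n, hxn, hn⟩ := (hx.and (hr.eventually_lt_const he)).exists
  obtain ⟨y, hy, hxy⟩ := mem_thickening_iff.1 hxn
  exact ⟨y, hy, hxy.trans hn⟩

lemma eventually_finite_thickening_inter {A B : Set X} (hA : A.Finite) (hB : B.Finite)
    (hAB : ∀ x ∈ A ∩ B, IsOpen {x}) :
    ∀ᶠ e : ℝ in 𝓝[>] 0, (thickening e A ∩ thickening e B).Finite := by
  have hballs : ∀ a ∈ A, ∀ b ∈ B, ∀ᶠ e : ℝ in 𝓝[>] 0, (ball a e ∩ ball b e).Finite := by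
    intro a ha b hb
    rcases eq_or_ne a b with rfl | hab
    · filter_upwards [eventually_thickening_subset isCompact_singleton (hAB a ⟨ha, hb⟩) le_rfl]
        with e he
      rw [thickening_singleton] at he
      exact (Set.finite_singleton a).subset (Set.inter_subset_left.trans he)
    · filter_upwards [Ioo_mem_nhdsGT (half_pos (dist_pos.2 hab))] with e he
      rw [(ball_disjoint_ball (by linarith [he.2])).inter_eq]
      exact Set.finite_empty
  filter_upwards [(eventually_all_finite hA).2 fun a ha =>
    (eventually_all_finite hB).2 (hballs a ha)] with e he
  simp only [thickening_eq_biUnion_ball, Set.iUnion₂_inter, Set.inter_iUnion₂]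
  exact hB.biUnion fun b hb => hA.biUnion fun a ha => he a ha b hb

end Metric

section Hyperspace

open Metric

variable {X : Type*} [MetricSpace X] {A B : Closeds X} {e : ℝ}

lemma subset_thickening_of_edist_lt (h : edist A B < ENNReal.ofReal e) :
    (A : Set X) ⊆ thickening e (B : Set X) := fun _ hx =>
  (mem_thickening_iff_exists_edist_lt _ _).2 (exists_edist_lt_of_hausdorffEDist_lt hx h)

variable [CompactSpace X]

lemma exists_forall_infEDist_le (he : 0 < e) (h : (A : Set X) ⊆ thickening e (B : Set X)) :
    ∃ r < ENNReal.ofReal e, ∀ x ∈ (A : Set X), infEDist x B ≤ r := by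
  rcases (A : Set X).eq_empty_or_nonempty with hA | hA
  · exact ⟨0, ENNReal.ofReal_pos.2 he, by simp [hA]⟩
  · obtain ⟨x, hx, hmax⟩ := A.isClosed.isCompact.exists_isMaxOn hA
      (continuous_infEDist (s := (B : Set X))).continuousOn
    exact ⟨infEDist x B, h hx, fun y hy => hmax hy⟩

lemma edist_lt_ofReal_iff (he : 0 < e) : edist A B < ENNReal.ofReal e ↔
    (A : Set X) ⊆ thickening e (B : Set X) ∧ (B : Set X) ⊆ thickening e (A : Set X) := by
  refine ⟨fun h => ⟨subset_thickening_of_edist_lt h,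
    subset_thickening_of_edist_lt (edist_comm A B ▸ h)⟩, fun ⟨hAB, hBA⟩ => ?_⟩
  obtain ⟨r, hr, hAr⟩ := exists_forall_infEDist_le he hAB
  obtain ⟨s, hs, hBs⟩ := exists_forall_infEDist_le he hBA
  exact (hausdorffEDist_le_of_infEDist (fun x hx => (hAr x hx).trans (le_max_left r s))
    fun x hx => (hBs x hx).trans (le_max_right r s)).trans_lt (max_lt hr hs)

lemma isOpen_setOf_closeds_subset {U : Set X} (hU : IsOpen U) :
    IsOpen {K : Closeds X | (K : Set X) ⊆ U} := by
  refine EMetric.isOpen_iff.2 fun K hK => ?_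
  obtain ⟨d, hd, hdU⟩ := K.isClosed.isCompact.exists_thickening_subset_open hU hK
  exact ⟨ENNReal.ofReal d, ENNReal.ofReal_pos.2 hd, fun L hL =>
    (subset_thickening_of_edist_lt hL).trans hdU⟩

lemma dense_setOf_finite_subset {D : Set X} (hD : Dense D) :
    Dense {K : Closeds X | (K : Set X).Finite ∧ (K : Set X) ⊆ D} := by
  have hcompacts : Dense {K : Compacts X | (K : Set X).Finite ∧ (K : Set X) ⊆ D} := by
    rw [dense_iff_closure_eq, Compacts.closure_finite_subsets, hD.closure_eq]
    simp
  have hsurj : Function.Surjective (Compacts.toCloseds (α := X)) := fun K =>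
    ⟨⟨K, K.isClosed.isCompact⟩, rfl⟩
  exact (hsurj.denseRange.dense_image Compacts.continuous_toCloseds hcompacts).mono
    (by rintro _ ⟨K, hK, rfl⟩; exact hK)

lemma exists_finite_mem_of_isOpen {U : Set (Closeds X)} (hU : IsOpen U) (hne : U.Nonempty)
    {S : Set X} (hS : S.Finite) :
    ∃ K ∈ U, (K : Set X).Finite ∧ ∀ x ∈ (K : Set X) ∩ S, IsOpen {x} := by
  obtain ⟨K, hKU, hK, hKS⟩ := (dense_setOf_finite_subset
    (dense_compl_of_finite_of_not_isOpen_singleton (hS.inter_of_left {x | ¬IsOpen {x}})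
      fun x hx => hx.2)).inter_open_nonempty U hU hne
  exact ⟨K, hKU, hK, fun x hx => by_contra fun hxo => hKS hx.1 ⟨hx.2, hxo⟩⟩

lemma exists_finite_pairwise_inter_isolated {U : ℕ → Set (Closeds X)}
    (hU : ∀ i, IsOpen (U i) ∧ (U i).Nonempty) (n : ℕ) :
    ∃ E : ℕ → Closeds X, (⋃ i, (E i : Set X)).Finite ∧
      (Pairwise fun i j => ∀ x ∈ (E i : Set X) ∩ E j, IsOpen {x}) ∧ ∀ i < n, E i ∈ U i := by
  induction n with
  | zero => exact ⟨fun _ => ⊥, by simp, fun i j _ => by simp, by simp⟩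
  | succ n ih =>
    obtain ⟨E, hfin, hE, hEU⟩ := ih
    obtain ⟨K, hKU, hK, hKE⟩ := exists_finite_mem_of_isOpen (hU n).1 (hU n).2 hfin
    have hKE' : ∀ i, ∀ x ∈ (K : Set X) ∩ E i, IsOpen {x} := fun i x hx =>
      hKE x ⟨hx.1, Set.mem_iUnion_of_mem i hx.2⟩
    refine ⟨Function.update E n K, (hfin.union hK).subset (Set.iUnion_subset fun i => ?_),
      fun i j hij => ?_, fun i hi => ?_⟩
    · rcases eq_or_ne i n with rfl | hi
      · simp
      · rw [Function.update_of_ne hi]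
        exact (Set.subset_iUnion (fun i => (E i : Set X)) i).trans Set.subset_union_left
    · rcases eq_or_ne i n with rfl | hi
      · simpa [hij.symm] using hKE' j
      · rcases eq_or_ne j n with rfl | hj
        · simpa [hi, and_comm] using hKE' i
        · simpa [hi, hj] using hE hij
    · rcases (Nat.lt_succ_iff_lt_or_eq.1 hi) with hi | rfl
      · simpa [hi.ne] using hEU i hi
      · simpa using hKU

theorem dense_setOf_pairwise_finite_thickening_inter :
    Dense {E : ℕ → Closeds X | Pairwise fun i j => ∀ᶠ e : ℝ in 𝓝[>] 0,
      (thickening e (E i : Set X) ∩ thickening e (E j : Set X)).Finite} := by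
  refine dense_iff_inter_open.2 fun O hO ⟨A, hA⟩ => ?_
  obtain ⟨n, u, hu, huO⟩ := exists_pi_Iio_subset hO hA
  obtain ⟨E, hfin, hE, hEu⟩ :=
    exists_finite_pairwise_inter_isolated (fun i => ⟨(hu i).1, A i, (hu i).2⟩) n
  have hfinite : ∀ i, (E i : Set X).Finite := fun i =>
    hfin.subset (Set.subset_iUnion (fun i => (E i : Set X)) i)
  exact ⟨E, huO hEu, fun i j hij =>
    eventually_finite_thickening_inter (hfinite i) (hfinite j) (hE hij)⟩

end Hyperspace

section LabelUnion

open Metric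

variable {X : Type*}

/-- The union of those sets among `E 0, …, E (N - 1)` whose label is at most `j`. As `j` varies,
these sets turn a labelled sequence of closed sets into an increasing one. -/
noncomputable def labelUnion [TopologicalSpace X] (N : ℕ) (label : ℕ → ℕ) (E : ℕ → Closeds X)
    (j : ℕ) : Closeds X :=
  ((Finset.range N).filter (label · ≤ j)).sup E

lemma mem_labelUnion [TopologicalSpace X] {N : ℕ} {label : ℕ → ℕ} {E : ℕ → Closeds X} {j : ℕ}
    {x : X} : x ∈ labelUnion N label E j ↔ ∃ i < N, label i ≤ j ∧ x ∈ E i := by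
  rw [labelUnion, ← SetLike.mem_coe, Closeds.coe_finset_sup]
  simp [and_assoc]

lemma monotone_labelUnion [TopologicalSpace X] (N : ℕ) (label : ℕ → ℕ) (E : ℕ → Closeds X) :
    Monotone (labelUnion N label E) := fun _ _ h =>
  Finset.sup_mono (Finset.monotone_filter_right _ fun _ _ hi => hi.trans h)

lemma labelUnion_congr [TopologicalSpace X] {M N : ℕ} {label label' : ℕ → ℕ} {j : ℕ}
    (h : ∀ i, i < M ∧ label i ≤ j ↔ i < N ∧ label' i ≤ j) (E : ℕ → Closeds X) :
    labelUnion M label E j = labelUnion N label' E j :=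
  congrArg (Finset.sup · E) (Finset.ext fun i => by simpa using h i)

variable [MetricSpace X]

lemma continuous_labelUnion (N : ℕ) (label : ℕ → ℕ) :
    Continuous (labelUnion (X := X) N label) :=
  continuous_pi fun _ => .finset_sup_apply fun i _ => continuous_apply i

lemma coe_labelUnion_subset_thickening {N : ℕ} {label : ℕ → ℕ} {E F : ℕ → Closeds X} {e : ℝ}
    (h : ∀ i < N, (E i : Set X) ⊆ thickening e (F i : Set X)) (j : ℕ) :
    (labelUnion N label E j : Set X) ⊆ thickening e (labelUnion N label F j : Set X) := by
  intro x hx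
  obtain ⟨i, hi, hij, hxi⟩ := mem_labelUnion.1 hx
  exact thickening_subset_of_subset e (fun y hy => mem_labelUnion.2 ⟨i, hi, hij, hy⟩) (h i hi hxi)

lemma edist_labelUnion_lt [CompactSpace X] {N : ℕ} (label : ℕ → ℕ) {E F : ℕ → Closeds X} {e : ℝ}
    (he : 0 < e) (h : ∀ i < N, edist (E i) (F i) < ENNReal.ofReal e) (j : ℕ) :
    edist (labelUnion N label E j) (labelUnion N label F j) < ENNReal.ofReal e :=
  (edist_lt_ofReal_iff he).2
    ⟨coe_labelUnion_subset_thickening (fun i hi => ((edist_lt_ofReal_iff he).1 (h i hi)).1) j,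
      coe_labelUnion_subset_thickening (fun i hi => ((edist_lt_ofReal_iff he).1 (h i hi)).2) j⟩

end LabelUnion

section Game

open Filter Metric

variable {X : Type*} [MetricSpace X]

/-- The open set of sequences of closed sets whose first `N` terms are `e`-close to those of `E` in
the Hausdorff metric. -/
def hausdorffBox (N : ℕ) (E : ℕ → Closeds X) (e : ℝ) : Set (ℕ → Closeds X) :=
  (Set.Iio N).pi fun i => eball (E i) (ENNReal.ofReal e)

lemma isOpen_hausdorffBox (N : ℕ) (E : ℕ → Closeds X) (e : ℝ) : IsOpen (hausdorffBox N E e) :=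
  isOpen_set_pi (Set.finite_Iio N) fun _ _ => isOpen_eball

lemma self_mem_hausdorffBox (N : ℕ) (E : ℕ → Closeds X) {e : ℝ} (he : 0 < e) :
    E ∈ hausdorffBox N E e := fun _ _ => mem_eball_self (ENNReal.ofReal_pos.2 he)

lemma eventually_closure_hausdorffBox_subset {M N : ℕ} (hMN : M ≤ N) {E : ℕ → Closeds X}
    {U : ℕ → Set (Closeds X)} (hU : ∀ i < M, U i ∈ 𝓝 (E i)) :
    ∀ᶠ e : ℝ in 𝓝[>] 0, closure (hausdorffBox N E e) ⊆ (Set.Iio M).pi U := by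
  filter_upwards [(eventually_all_finite (Set.finite_Iio M)).2 fun i hi =>
    eventually_closure_eball_subset (hU i hi)] with e he
  rw [hausdorffBox, closure_pi_set]
  exact fun K hK i hi => he i hi (hK i (lt_of_lt_of_le hi hMN))

variable (X) in
/-- A joint position of the Banach–Mazur games on `ℕ → Closeds X` and on its subspace of monotone
sequences. Only the first `size` centers matter. They approximate the first `size` terms of a
sequence `K`, while the unions of the centers with label at most `j`, for `j < size`, approximate
the first `size` terms of a monotone sequence `L`. The label of a center is thus the index at which
it enters `L`, and by `label_le` this is one of the approximated terms. -/
structure JointPosition where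
  size : ℕ
  label : ℕ → ℕ
  center : ℕ → Closeds X
  radius : ℝ
  label_le : ∀ i, label i ≤ i
  radius_pos : 0 < radius
  radius_le : radius ≤ 1 / (size + 1)
  finite_inter : (Set.Iio size).Pairwise fun i j =>
    (thickening radius (center i : Set X) ∩ thickening radius (center j : Set X)).Finite

namespace JointPosition

/-- The position at which both games start. -/
def root : JointPosition X where
  size := 0
  label _ := 0
  center _ := ⊥
  radius := 1
  label_le := Nat.zero_le
  radius_pos := one_pos
  radius_le := by norm_num
  finite_inter i hi := absurd hi (Nat.not_lt_zero i)

variable (p q r : JointPosition X)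

/-- The neighbourhood of the `i`-th center which has to contain the `i`-th center of every later
position. -/
def nbhd (i : ℕ) : Set X := thickening p.radius (p.center i : Set X)

/-- The monotone sequence associated with the centers of `p`. -/
noncomputable def level : ℕ → Closeds X := labelUnion p.size p.label p.center

/-- The open set of sequences `K` which are compatible with `p`. -/
def box : Set (ℕ → Closeds X) := hausdorffBox p.size p.center p.radius

/-- The open set of sequences whose monotone members are the sequences `L` compatible with `p`. -/
def levelBox : Set (ℕ → Closeds X) := hausdorffBox p.size p.level p.radius

/-- The union of the neighbourhoods of the centers with label less than `l`. -/
def below (l : ℕ) : Set X := ⋃ i ∈ {i | i < p.size ∧ p.label i < l}, p.nbhd i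

/-- The region in which the `i`-th center of a continuation of `p` has to lie if its label is `l`:
old centers may only move inside their neighbourhoods, and a new center which enters one of the
already approximated terms of `L` has to lie near old centers with smaller labels. -/
def region (i l : ℕ) : Set X :=
  if i < p.size then p.nbhd i else if l < p.size then p.below l else Set.univ

/-- The labels of a continuation of `p` whose new centers are labelled by `f`. -/
def extendLabel (f : ℕ → ℕ) (i : ℕ) : ℕ := if i < p.size then p.label i else f i

/-- `p.Refines q` says that `q` is an admissible continuation of `p` in both games. -/
structure Refines : Prop where
  size_lt : p.size < q.size
  label_eq : ∀ i < p.size, q.label i = p.label i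
  nbhd_subset_region : ∀ i < q.size, q.nbhd i ⊆ p.region i (q.label i)
  closure_box_subset : closure q.box ⊆ p.box
  closure_levelBox_subset : closure q.levelBox ⊆ p.levelBox

variable {p q r}

lemma isOpen_nbhd (i : ℕ) : IsOpen (p.nbhd i) := isOpen_thickening

lemma mem_below {l : ℕ} {x : X} :
    x ∈ p.below l ↔ ∃ i < p.size, p.label i < l ∧ x ∈ p.nbhd i := by
  simp [below, and_assoc]

lemma below_mono : Monotone p.below := fun _ _ h =>
  Set.biUnion_subset_biUnion_left fun _ hi => ⟨hi.1, hi.2.trans_le h⟩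

lemma isOpen_region (i l : ℕ) : IsOpen (p.region i l) := by
  unfold region
  split_ifs
  exacts [isOpen_nbhd i, isOpen_biUnion fun i _ => isOpen_nbhd i, isOpen_univ]

lemma coe_subset_nbhd {K : ℕ → Closeds X} (hK : K ∈ p.box) {i : ℕ} (hi : i < p.size) :
    (K i : Set X) ⊆ p.nbhd i :=
  subset_thickening_of_edist_lt (hK i hi)

lemma region_of_lt {i : ℕ} (hi : i < p.size) (l : ℕ) : p.region i l = p.nbhd i := if_pos hi

lemma region_of_le {i l : ℕ} (hi : p.size ≤ i) (hl : l < p.size) : p.region i l = p.below l := by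
  rw [region, if_neg hi.not_gt, if_pos hl]

lemma region_of_le_label {i l : ℕ} (hi : p.size ≤ i) (hl : p.size ≤ l) :
    p.region i l = Set.univ := by
  rw [region, if_neg hi.not_gt, if_neg hl.not_gt]

lemma extendLabel_of_lt (f : ℕ → ℕ) {i : ℕ} (hi : i < p.size) :
    p.extendLabel f i = p.label i := if_pos hi

lemma extendLabel_of_le (f : ℕ → ℕ) {i : ℕ} (hi : p.size ≤ i) : p.extendLabel f i = f i :=
  if_neg hi.not_gt

lemma extendLabel_le {f : ℕ → ℕ} (hf : ∀ i, p.size ≤ i → f i ≤ i) (i : ℕ) :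
    p.extendLabel f i ≤ i := by
  unfold extendLabel
  split_ifs with hi
  exacts [p.label_le i, hf i (not_lt.1 hi)]

namespace Refines

lemma nbhd_subset (h : p.Refines q) {i : ℕ} (hi : i < p.size) : q.nbhd i ⊆ p.nbhd i :=
  region_of_lt hi (q.label i) ▸ h.nbhd_subset_region i (hi.trans h.size_lt)

lemma nbhd_subset_below (h : p.Refines q) {i : ℕ} (hi : p.size ≤ i) (hiq : i < q.size)
    (hl : q.label i < p.size) : q.nbhd i ⊆ p.below (q.label i) :=
  region_of_le hi hl ▸ h.nbhd_subset_region i hiq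

lemma below_subset (h : p.Refines q) {l : ℕ} (hl : l ≤ p.size) : q.below l ⊆ p.below l := by
  intro x hx
  obtain ⟨i, hiq, hil, hx⟩ := mem_below.1 hx
  rcases lt_or_ge i p.size with hip | hip
  · exact mem_below.2 ⟨i, hip, h.label_eq i hip ▸ hil, h.nbhd_subset hip hx⟩
  · exact below_mono hil.le (h.nbhd_subset_below hip hiq (hil.trans_le hl) hx)

lemma trans (hpq : p.Refines q) (hqr : q.Refines r) : p.Refines r where
  size_lt := hpq.size_lt.trans hqr.size_lt
  label_eq i hi := (hqr.label_eq i (hi.trans hpq.size_lt)).trans (hpq.label_eq i hi)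
  closure_box_subset :=
    hqr.closure_box_subset.trans (subset_closure.trans hpq.closure_box_subset)
  closure_levelBox_subset :=
    hqr.closure_levelBox_subset.trans (subset_closure.trans hpq.closure_levelBox_subset)
  nbhd_subset_region i hi := by
    rcases lt_or_ge i q.size with hiq | hiq
    · rw [hqr.label_eq i hiq]
      exact (hqr.nbhd_subset hiq).trans (hpq.nbhd_subset_region i hiq)
    · have hip := hpq.size_lt.le.trans hiq
      rcases lt_or_ge (r.label i) p.size with hl | hl
      · rw [region_of_le hip hl]
        exact (hqr.nbhd_subset_below hiq hi (hl.trans hpq.size_lt)).trans (hpq.below_subset hl.le)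
      · exact region_of_le_label hip hl ▸ Set.subset_univ _

instance : IsTrans (JointPosition X) Refines := ⟨fun _ _ _ => trans⟩

end Refines

/-- The open set of monotone sequences `L` which are compatible with `p`. -/
def monoBox (p : JointPosition X) : Set {L : ℕ → Closeds X // Monotone L} :=
  Subtype.val ⁻¹' p.levelBox

lemma box_root : (root : JointPosition X).box = Set.univ := by
  simp [box, root, hausdorffBox]

lemma monoBox_root : (root : JointPosition X).monoBox = Set.univ := by
  simp [monoBox, levelBox, root, hausdorffBox]

/-- The pieces into which the centers of `p` cut an increasing sequence `L` close to its levels: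
the part of `L j` near the `i`-th center, if that center has label `j`, and, as the piece with
index `p.size + j`, the part of `L j` which lies away from all centers with label `j`. -/
def piece (p : JointPosition X) (L : ℕ → Closeds X) (i : ℕ) : Set X :=
  if i < p.size then L (p.label i) ∩ p.nbhd i
  else L (i - p.size) \ ⋃ i' ∈ {i' | i' < p.size ∧ p.label i' = i - p.size}, p.nbhd i'

variable {L : ℕ → Closeds X}

lemma piece_of_lt {i : ℕ} (hi : i < p.size) : p.piece L i = ↑(L (p.label i)) ∩ p.nbhd i :=
  if_pos hi

lemma mem_piece_add {j : ℕ} {x : X} : x ∈ p.piece L (p.size + j) ↔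
    x ∈ L j ∧ ∀ i < p.size, p.label i = j → x ∉ p.nbhd i := by
  simp [piece]

lemma coe_subset_below (hL : L ∈ p.levelBox) {j : ℕ} (hj : j < p.size) :
    (L j : Set X) ⊆ p.below (j + 1) := by
  intro x hx
  obtain ⟨z, hz, hxz⟩ := mem_thickening_iff.1 (subset_thickening_of_edist_lt (hL j hj) hx)
  obtain ⟨i, hi, hij, hzi⟩ := mem_labelUnion.1 hz
  exact mem_below.2 ⟨i, hi, Nat.lt_succ_of_le hij, mem_thickening_iff.2 ⟨z, hzi, hxz⟩⟩

lemma isClosed_piece (hL : L ∈ p.levelBox) (i : ℕ) : IsClosed (p.piece L i) := by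
  unfold piece
  split_ifs with hi
  · exact isClosed_inter_of_pairwise_finite_inter (L (p.label i)).isClosed
      (fun i' _ => isOpen_nbhd i') (p.finite_inter.mono fun i' hi' => hi'.1)
      (coe_subset_below hL ((p.label_le i).trans_lt hi)) ⟨hi, Nat.lt_succ_self _⟩
  · exact (L _).isClosed.sdiff (isOpen_biUnion fun i' _ => isOpen_nbhd i')

lemma piece_subset_region (hL : L ∈ p.levelBox) (i : ℕ) :
    p.piece L i ⊆ p.region i (p.extendLabel (· - p.size) i) := by
  rcases lt_or_ge i p.size with hi | hi
  · rw [piece_of_lt hi, region_of_lt hi]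
    exact Set.inter_subset_right
  obtain ⟨j, rfl⟩ := Nat.exists_eq_add_of_le hi
  rw [extendLabel_of_le _ hi, Nat.add_sub_cancel_left]
  rcases lt_or_ge j p.size with hj | hj
  · rw [region_of_le hi hj]
    intro x hx
    obtain ⟨hxj, hxn⟩ := mem_piece_add.1 hx
    obtain ⟨i, hip, hij, hxi⟩ := mem_below.1 (coe_subset_below hL hj hxj)
    exact mem_below.2 ⟨i, hip, (Nat.le_of_lt_succ hij).lt_of_ne fun h => hxn i hip h hxi, hxi⟩
  · exact region_of_le_label hi hj ▸ Set.subset_univ _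

lemma labelUnion_eq_of_coe_eq_piece (hL : Monotone L) {A : ℕ → Closeds X}
    (hA : ∀ i, (A i : Set X) = p.piece L i) {j k : ℕ} (hjk : j < k) :
    labelUnion (p.size + k) (p.extendLabel (· - p.size)) A j = L j := by
  refine SetLike.ext fun x => ?_
  rw [mem_labelUnion]
  constructor
  · rintro ⟨i, -, hij, hx⟩
    rw [← SetLike.mem_coe, hA] at hx
    rcases lt_or_ge i p.size with hi | hi
    · rw [piece_of_lt hi] at hx
      exact hL (extendLabel_of_lt _ hi ▸ hij) hx.1
    · obtain ⟨j', rfl⟩ := Nat.exists_eq_add_of_le hi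
      rw [extendLabel_of_le _ hi, Nat.add_sub_cancel_left] at hij
      exact hL hij (mem_piece_add.1 hx).1
  · intro hx
    by_cases hnear : ∃ i < p.size, p.label i = j ∧ x ∈ p.nbhd i
    · obtain ⟨i, hi, rfl, hxi⟩ := hnear
      refine ⟨i, by omega, (extendLabel_of_lt _ hi).le, ?_⟩
      rw [← SetLike.mem_coe, hA, piece_of_lt hi]
      exact ⟨hx, hxi⟩
    · push Not at hnear
      refine ⟨p.size + j, by omega, by simp [extendLabel], ?_⟩
      rw [← SetLike.mem_coe, hA]
      exact mem_piece_add.2 ⟨hx, hnear⟩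

section Compact

variable [CompactSpace X]

lemma exists_position_of_eventually {N I J : ℕ} (hI : I ≤ N) (hJ : J ≤ N) {label : ℕ → ℕ}
    (hlabel : ∀ i, label i ≤ i) {G : ℕ → Set X} {U V : ℕ → Set (Closeds X)} {E : ℕ → Closeds X}
    (hE : Pairwise fun i j => ∀ᶠ e : ℝ in 𝓝[>] 0,
      (thickening e (E i : Set X) ∩ thickening e (E j : Set X)).Finite)
    (hG : ∀ i < N, IsOpen (G i) ∧ (E i : Set X) ⊆ G i) (hU : ∀ i < I, U i ∈ 𝓝 (E i))
    (hV : ∀ j < J, V j ∈ 𝓝 (labelUnion N label E j)) :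
    ∃ q : JointPosition X, q.size = N ∧ q.label = label ∧ (∀ i < N, q.nbhd i ⊆ G i) ∧
      closure q.box ⊆ (Set.Iio I).pi U ∧ closure q.levelBox ⊆ (Set.Iio J).pi V := by
  have hpos : ∀ᶠ e : ℝ in 𝓝[>] 0, 0 < e := self_mem_nhdsWithin
  have hsmall : ∀ᶠ e : ℝ in 𝓝[>] 0, e ≤ 1 / (N + 1) :=
    eventually_nhdsWithin_of_eventually_nhds (eventually_le_nhds Nat.one_div_pos_of_nat)
  have hnbhd : ∀ᶠ e : ℝ in 𝓝[>] 0, ∀ i ∈ Set.Iio N, thickening e (E i : Set X) ⊆ G i :=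
    (eventually_all_finite (Set.finite_Iio N)).2 fun i hi =>
      eventually_thickening_subset (E i).isClosed.isCompact (hG i hi).1 (hG i hi).2
  have hfin : ∀ᶠ e : ℝ in 𝓝[>] 0, (Set.Iio N).Pairwise fun i j =>
      (thickening e (E i : Set X) ∩ thickening e (E j : Set X)).Finite :=
    (eventually_all_finite (Set.finite_Iio N)).2 fun i _ =>
      (eventually_all_finite (Set.finite_Iio N)).2 fun j _ =>
        eventually_imp_distrib_left.2 fun hij => hE hij
  obtain ⟨e, ⟨⟨⟨he, heN⟩, heG⟩, heE⟩, heU, heV⟩ := (((hpos.and hsmall).and hnbhd).and hfin).and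
    ((eventually_closure_hausdorffBox_subset hI hU).and
      (eventually_closure_hausdorffBox_subset hJ hV)) |>.exists
  exact ⟨⟨N, label, E, e, hlabel, he, heN, heE⟩, rfl, rfl, heG, heU, heV⟩

lemma exists_position {N I J : ℕ} (hI : I ≤ N) (hJ : J ≤ N) {label : ℕ → ℕ}
    (hlabel : ∀ i, label i ≤ i) {G : ℕ → Set X} {U V : ℕ → Set (Closeds X)} {A : ℕ → Closeds X}
    (hG : ∀ i < N, IsOpen (G i) ∧ (A i : Set X) ⊆ G i)
    (hU : ∀ i < I, IsOpen (U i) ∧ A i ∈ U i)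
    (hV : ∀ j < J, IsOpen (V j) ∧ labelUnion N label A j ∈ V j) :
    ∃ q : JointPosition X, q.size = N ∧ q.label = label ∧ (∀ i < N, q.nbhd i ⊆ G i) ∧
      closure q.box ⊆ (Set.Iio I).pi U ∧ closure q.levelBox ⊆ (Set.Iio J).pi V := by
  have hGopen : IsOpen ((Set.Iio N).pi fun i => {K : Closeds X | (K : Set X) ⊆ G i}) :=
    isOpen_set_pi (Set.finite_Iio N) fun i hi => isOpen_setOf_closeds_subset (hG i hi).1
  have hUopen : IsOpen ((Set.Iio I).pi U) :=
    isOpen_set_pi (Set.finite_Iio I) fun i hi => (hU i hi).1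
  have hVopen : IsOpen (labelUnion N label ⁻¹' (Set.Iio J).pi V) :=
    (isOpen_set_pi (Set.finite_Iio J) fun j hj => (hV j hj).1).preimage
      (continuous_labelUnion N label)
  obtain ⟨E, ⟨hEG, hEU, hEV⟩, hE⟩ :=
    dense_setOf_pairwise_finite_thickening_inter.inter_open_nonempty _
      (hGopen.inter (hUopen.inter hVopen))
      ⟨A, fun i hi => (hG i hi).2, fun i hi => (hU i hi).2, fun j hj => (hV j hj).2⟩
  exact exists_position_of_eventually hI hJ hlabel hE (fun i hi => ⟨(hG i hi).1, hEG i hi⟩)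
    (fun i hi => (hU i hi).1.mem_nhds (hEU i hi)) fun j hj => (hV j hj).1.mem_nhds (hEV j hj)

lemma exists_refines {N I J : ℕ} (hN : p.size < N) (hI : I ≤ N) (hJ : J ≤ N) {label : ℕ → ℕ}
    (hlabel : ∀ i, label i ≤ i) (hlabel_eq : ∀ i < p.size, label i = p.label i)
    {U V : ℕ → Set (Closeds X)} (hUp : (Set.Iio I).pi U ⊆ p.box)
    (hVp : (Set.Iio J).pi V ⊆ p.levelBox) {A : ℕ → Closeds X}
    (hregion : ∀ i < N, (A i : Set X) ⊆ p.region i (label i))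
    (hU : ∀ i < I, IsOpen (U i) ∧ A i ∈ U i)
    (hV : ∀ j < J, IsOpen (V j) ∧ labelUnion N label A j ∈ V j) :
    ∃ q, p.Refines q ∧ q.box ⊆ (Set.Iio I).pi U ∧ q.levelBox ⊆ (Set.Iio J).pi V := by
  obtain ⟨q, rfl, rfl, hqregion, hqU, hqV⟩ :=
    exists_position hI hJ hlabel (fun i hi => ⟨isOpen_region i _, hregion i hi⟩) hU hV
  exact ⟨q, ⟨hN, hlabel_eq, hqregion, hqU.trans hUp, hqV.trans hVp⟩,
    subset_closure.trans hqU, subset_closure.trans hqV⟩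

/- New centers get the label `p.size`, so that they do not enter the terms of `L` which `p` already
approximates. -/
theorem exists_refines_box_subset {O : Set (ℕ → Closeds X)} (hO : IsOpen O) (hne : O.Nonempty)
    (hOp : O ⊆ p.box) : ∃ q, p.Refines q ∧ q.box ⊆ O := by
  obtain ⟨K, hKO⟩ := hne
  obtain ⟨n, u, hu, huO⟩ := exists_pi_Iio_subset hO hKO
  obtain ⟨N, hpN, hnN⟩ : ∃ N, p.size < N ∧ n ≤ N := ⟨max (p.size + 1) n, by simp, by simp⟩
  set label := p.extendLabel fun _ => p.size
  have hregion : ∀ i < N, (K i : Set X) ⊆ p.region i (label i) := by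
    intro i _
    rcases lt_or_ge i p.size with hi | hi
    · exact region_of_lt hi _ ▸ coe_subset_nbhd (hOp hKO) hi
    · rw [region_of_le_label hi (extendLabel_of_le (fun _ => p.size) hi).ge]
      exact Set.subset_univ _
  have hunion : ∀ j < p.size, labelUnion N label K j = labelUnion p.size p.label K j := by
    refine fun j hj => labelUnion_congr (fun i => ?_) K
    rcases lt_or_ge i p.size with hi | hi
    · simp [label, extendLabel_of_lt _ hi, hi, hi.trans hpN]
    · simp [label, extendLabel_of_le _ hi, hi.not_gt, hj.not_ge]
  have hlevel : ∀ j < p.size, labelUnion N label K j ∈ eball (p.level j) (.ofReal p.radius) :=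
    fun j hj => hunion j hj ▸ edist_labelUnion_lt p.label p.radius_pos (hOp hKO) j
  obtain ⟨q, hpq, hqu, -⟩ := exists_refines hpN hnN hpN.le (extendLabel_le fun _ hi => hi)
    (fun _ hi => extendLabel_of_lt _ hi) (huO.trans hOp) subset_rfl hregion (fun i _ => hu i)
    fun j hj => ⟨isOpen_eball, hlevel j hj⟩
  exact ⟨q, hpq, hqu.trans huO⟩

lemma mem_box_of_coe_eq_piece (hL : L ∈ p.levelBox) {A : ℕ → Closeds X}
    (hA : ∀ i, (A i : Set X) = p.piece L i) : A ∈ p.box := by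
  intro i hi
  rw [Set.mem_Iio] at hi
  refine (edist_lt_ofReal_iff p.radius_pos).2 ⟨?_, fun x hx => ?_⟩
  · rw [hA, piece_of_lt hi]
    exact Set.inter_subset_right
  · have hj := (p.label_le i).trans_lt hi
    obtain ⟨y, hy, hxy⟩ := mem_thickening_iff.1 <|
      ((edist_lt_ofReal_iff p.radius_pos).1 (hL _ hj)).2 (mem_labelUnion.2 ⟨i, hi, le_rfl, hx⟩)
    refine mem_thickening_iff.2 ⟨y, ?_, hxy⟩
    rw [hA, piece_of_lt hi]
    exact ⟨hy, mem_thickening_iff.2 ⟨x, hx, dist_comm x y ▸ hxy⟩⟩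

theorem exists_refines_levelBox_subset {O : Set (ℕ → Closeds X)} (hO : IsOpen O)
    (hOp : O ⊆ p.levelBox) (hL : Monotone L) (hLO : L ∈ O) :
    ∃ q, p.Refines q ∧ q.levelBox ⊆ O := by
  obtain ⟨n, u, hu, huO⟩ := exists_pi_Iio_subset hO hLO
  let A : ℕ → Closeds X := fun i => ⟨p.piece L i, isClosed_piece (hOp hLO) i⟩
  have hA : ∀ i, (A i : Set X) = p.piece L i := fun _ => rfl
  have hunion : ∀ j < n, labelUnion (p.size + (n + 1)) (p.extendLabel (· - p.size)) A j = L j :=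
    fun j hj => labelUnion_eq_of_coe_eq_piece hL hA (hj.trans n.lt_succ_self)
  obtain ⟨q, hpq, -, hqu⟩ := exists_refines (N := p.size + (n + 1)) (by omega) (by omega)
    (by omega) (extendLabel_le fun i _ => Nat.sub_le i p.size)
    (fun _ hi => extendLabel_of_lt _ hi) subset_rfl (huO.trans hOp)
    (fun i _ => piece_subset_region (hOp hLO) i)
    (fun i hi => ⟨isOpen_eball, mem_box_of_coe_eq_piece (hOp hLO) hA i hi⟩)
    fun j hj => ⟨(hu j).1, (hunion j hj).symm ▸ (hu j).2⟩
  exact ⟨q, hpq, hqu.trans huO⟩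


lemma isBanachMazurScheme_box :
    IsBanachMazurScheme Refines (box : JointPosition X → Set (ℕ → Closeds X)) where
  isOpen p := isOpen_hausdorffBox p.size p.center p.radius
  nonempty p := ⟨p.center, self_mem_hausdorffBox p.size p.center p.radius_pos⟩
  closure_subset h := h.closure_box_subset
  exists_subset _ _ hVp hV hne := exists_refines_box_subset hV hne hVp

lemma isBanachMazurScheme_monoBox :
    IsBanachMazurScheme Refines
      (monoBox : JointPosition X → Set {L : ℕ → Closeds X // Monotone L}) where
  isOpen p := (isOpen_hausdorffBox p.size p.level p.radius).preimage continuous_subtype_val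
  nonempty p := ⟨⟨p.level, monotone_labelUnion p.size p.label p.center⟩,
    self_mem_hausdorffBox p.size p.level p.radius_pos⟩
  closure_subset h := (continuous_subtype_val.closure_preimage_subset _).trans
    (Set.preimage_mono h.closure_levelBox_subset)
  exists_subset := by
    rintro p _ hVp ⟨O, hO, rfl⟩ ⟨L, hLO⟩
    obtain ⟨q, hpq, hqO⟩ := exists_refines_levelBox_subset
      (hO.inter (isOpen_hausdorffBox p.size p.level p.radius)) Set.inter_subset_right L.2
      ⟨hLO, hVp hLO⟩
    exact ⟨q, hpq, Set.preimage_mono (hqO.trans Set.inter_subset_left)⟩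

end Compact

lemma nbhd_subset_thickening {K : ℕ → Closeds X} (hK : K ∈ p.box) {i : ℕ} (hi : i < p.size) :
    p.nbhd i ⊆ thickening (p.radius + p.radius) (K i : Set X) :=
  (thickening_subset_of_subset p.radius
    (subset_thickening_of_edist_lt (edist_comm (K i) _ ▸ hK i hi))).trans
    (thickening_thickening_subset p.radius p.radius _)

lemma nbhd_subset_thickening_label (hL : L ∈ p.levelBox) {i : ℕ} (hi : i < p.size) :
    p.nbhd i ⊆ thickening (p.radius + p.radius) (L (p.label i) : Set X) := by
  have hcenter : (p.center i : Set X) ⊆ p.level (p.label i) := fun x hx =>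
    mem_labelUnion.2 ⟨i, hi, le_rfl, hx⟩
  have hlevel : (p.level (p.label i) : Set X) ⊆ thickening p.radius (L (p.label i) : Set X) :=
    subset_thickening_of_edist_lt
      (edist_comm (L (p.label i)) _ ▸ hL (p.label i) ((p.label_le i).trans_lt hi))
  exact (thickening_subset_of_subset p.radius (hcenter.trans hlevel)).trans
    (thickening_thickening_subset p.radius p.radius _)

lemma eq_of_mem_nbhd {x : X} (hx : ¬IsOpen {x}) {i j : ℕ} (hi : i < p.size) (hj : j < p.size)
    (hxi : x ∈ p.nbhd i) (hxj : x ∈ p.nbhd j) : i = j := by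
  by_contra hij
  exact hx (isOpen_singleton_of_finite_mem_nhds x
    (((isOpen_nbhd i).inter (isOpen_nbhd j)).mem_nhds ⟨hxi, hxj⟩) (p.finite_inter hi hj hij))

lemma Refines.mem_nbhd_or_exists_label_lt (h : p.Refines q) {x : X} (hx : ¬IsOpen {x}) {i j : ℕ}
    (hj : j < p.size) (hi : i < p.size) (hxi : x ∈ p.nbhd i) (hxj : x ∈ q.below (j + 1)) :
    x ∈ q.nbhd i ∨
      ∃ i' < q.size, q.label i' ≤ j ∧ p.label i < q.label i' ∧ x ∈ q.nbhd i' := by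
  obtain ⟨i', hi'q, hi'j, hxi'⟩ := mem_below.1 hxj
  rcases lt_or_ge i' p.size with hi'p | hi'p
  · exact .inl (eq_of_mem_nbhd hx hi hi'p hxi (h.nbhd_subset hi'p hxi') ▸ hxi')
  · have hi'j := Nat.le_of_lt_succ hi'j
    obtain ⟨k, hk, hki', hxk⟩ :=
      mem_below.1 (h.nbhd_subset_below hi'p hi'q (hi'j.trans_lt hj) hxi')
    obtain rfl := eq_of_mem_nbhd hx hi hk hxi hxk
    exact .inr ⟨i', hi'q, hi'j, hki', hxi'⟩

section Limit

variable {s : ℕ → JointPosition X} {K : ℕ → Closeds X}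

lemma le_size (hs : ∀ n, (s n).Refines (s (n + 1))) (n : ℕ) : n ≤ (s n).size :=
  (strictMono_nat_of_lt_succ fun n => (hs n).size_lt).le_apply

lemma tendsto_radius_add_radius (hs : ∀ n, (s n).Refines (s (n + 1))) :
    Tendsto (fun n => (s n).radius + (s n).radius) atTop (𝓝 0) := by
  have hradius : Tendsto (fun n => (s n).radius) atTop (𝓝 0) := by
    refine squeeze_zero (fun n => (s n).radius_pos.le) (fun n => (s n).radius_le.trans ?_)
      tendsto_one_div_add_atTop_nhds_zero_nat
    gcongr
    exact le_size hs n
  simpa using hradius.add hradius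

lemma coe_subset_coe_label (hs : ∀ n, (s n).Refines (s (n + 1)))
    (hK : ∀ n, K ∈ (s n).box) (hL : ∀ n, L ∈ (s n).levelBox) (i : ℕ) :
    (K i : Set X) ⊆ L ((s (i + 1)).label i) := by
  refine fun x hx =>
    mem_of_eventually_mem_thickening (tendsto_radius_add_radius hs) (L _).isClosed ?_
  filter_upwards [eventually_gt_atTop (i + 1)] with n hn
  have hlabel := (Nat.rel_of_forall_rel_succ_of_lt Refines hs hn).label_eq i (le_size hs (i + 1))
  have hi : i < (s n).size := (i.lt_succ_self.trans hn).trans_le (le_size hs n)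
  exact hlabel ▸ nbhd_subset_thickening_label (hL n) hi (coe_subset_nbhd (hK n) hi hx)

lemma exists_mem_of_isOpen_singleton (hs : ∀ n, (s n).Refines (s (n + 1)))
    (hK : ∀ n, K ∈ (s n).box) {x : X} (hx : IsOpen {x}) {j : ℕ}
    (hxj : ∀ n > j, x ∈ (s n).below (j + 1)) : ∃ i, x ∈ K i := by
  have hpos : ∀ᶠ n in atTop, 0 < (s n).radius + (s n).radius :=
    .of_forall fun n => add_pos (s n).radius_pos (s n).radius_pos
  have hball := (tendsto_nhdsWithin_iff.2 ⟨tendsto_radius_add_radius hs, hpos⟩).eventually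
    (eventually_thickening_subset isCompact_singleton hx subset_rfl)
  obtain ⟨n, hn, hnx⟩ := ((eventually_gt_atTop j).and hball).exists
  obtain ⟨i, hi, -, hxi⟩ := mem_below.1 (hxj n hn)
  obtain ⟨y, hy, hxy⟩ := mem_thickening_iff.1 (nbhd_subset_thickening (hK n) hi hxi)
  obtain rfl : y = x := hnx (mem_thickening_iff.2 ⟨x, rfl, dist_comm x y ▸ hxy⟩)
  exact ⟨i, hy⟩

lemma exists_forall_mem_nbhd (hs : ∀ n, (s n).Refines (s (n + 1))) {x : X}
    (hx : ¬IsOpen {x}) {j : ℕ} (hxj : ∀ n > j, x ∈ (s n).below (j + 1)) :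
    ∃ n i, i < (s n).size ∧ ∀ m ≥ n, x ∈ (s m).nbhd i := by
  let labels : Set ℕ :=
    {l | l ≤ j ∧ ∃ n > j, ∃ i < (s n).size, (s n).label i = l ∧ x ∈ (s n).nbhd i}
  obtain ⟨l, ⟨-, n, hn, i, hi, hil, hxi⟩, hmax⟩ : ∃ l, IsGreatest labels l := by
    obtain ⟨i, hi, hij, hxi⟩ := mem_below.1 (hxj (j + 1) j.lt_succ_self)
    exact BddAbove.exists_isGreatest_of_nonempty ⟨j, fun l hl => hl.1⟩
      ⟨_, Nat.le_of_lt_succ hij, j + 1, j.lt_succ_self, i, hi, rfl, hxi⟩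
  refine ⟨n, i, hi, fun m hm => ?_⟩
  suffices hstay : i < (s m).size ∧ (s m).label i = l ∧ x ∈ (s m).nbhd i from hstay.2.2
  induction m, hm using Nat.le_induction with
  | base => exact ⟨hi, hil, hxi⟩
  | succ m hm ih =>
    obtain ⟨him, hilm, hxim⟩ := ih
    have hjm : j < m := lt_of_lt_of_le hn hm
    refine ⟨him.trans (hs m).size_lt, ((hs m).label_eq i him).trans hilm, ?_⟩
    rcases (hs m).mem_nbhd_or_exists_label_lt hx (hjm.trans_le (le_size hs m)) him hxim
      (hxj _ (hjm.trans m.lt_succ_self)) with hstay | ⟨i', hi', hi'j, hlt, hxi'⟩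
    · exact hstay
    · have hle := hmax ⟨hi'j, m + 1, hjm.trans m.lt_succ_self, i', hi', rfl, hxi'⟩
      omega

theorem iUnion_coe_eq_iUnion_coe (hs : ∀ n, (s n).Refines (s (n + 1)))
    (hK : ∀ n, K ∈ (s n).box) (hL : ∀ n, L ∈ (s n).levelBox) :
    ⋃ n, (K n : Set X) = ⋃ n, (L n : Set X) := by
  refine Set.Subset.antisymm (Set.iUnion_subset fun i =>
    (coe_subset_coe_label hs hK hL i).trans (Set.subset_iUnion (fun j => (L j : Set X)) _))
    (Set.iUnion_subset fun j x hx => Set.mem_iUnion.2 ?_)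
  have hxj : ∀ n > j, x ∈ (s n).below (j + 1) := fun n hn =>
    coe_subset_below (hL n) (hn.trans_le (le_size hs n)) hx
  by_cases hxo : IsOpen {x}
  · exact exists_mem_of_isOpen_singleton hs hK hxo hxj
  · obtain ⟨n, i, hi, hxi⟩ := exists_forall_mem_nbhd hs hxo hxj
    refine ⟨i, mem_of_eventually_mem_thickening (tendsto_radius_add_radius hs) (K i).isClosed ?_⟩
    filter_upwards [eventually_ge_atTop n] with m hm
    exact nbhd_subset_thickening (hK m)
      (hi.trans_le ((strictMono_nat_of_lt_succ fun n => (hs n).size_lt).monotone hm)) (hxi m hm)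

end Limit

end JointPosition

end Game

theorem stmt_0_general {X : Type*} [MetricSpace X] [CompactSpace X] (F : Set (Set X)) :
    {K : ℕ → Closeds X | (⋃ n, (K n : Set X)) ∈ F} ∈ residual (ℕ → Closeds X) ↔
      {K : {K : ℕ → Closeds X // Monotone K} |
        (⋃ n, ((K : ℕ → Closeds X) n : Set X)) ∈ F} ∈
          residual {K : ℕ → Closeds X // Monotone K} := by
  have : SecondCountableTopology {K : ℕ → Closeds X // Monotone K} :=
    TopologicalSpace.Subtype.secondCountableTopology {K : ℕ → Closeds X | Monotone K}
  have hunion : ∀ s : ℕ → JointPosition X, (∀ n, (s n).Refines (s (n + 1))) →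
      ∀ K ∈ ⋂ n, (s n).box, ∀ L ∈ ⋂ n, (s n).monoBox,
        ⋃ n, (K n : Set X) = ⋃ n, (L.1 n : Set X) := fun s hs K hK L hL =>
    JointPosition.iUnion_coe_eq_iUnion_coe hs (fun n => Set.mem_iInter.1 hK n)
      fun n => Set.mem_iInter.1 hL n
  constructor
  · exact JointPosition.isBanachMazurScheme_box.mem_residual_of_mem_residual
      JointPosition.isBanachMazurScheme_monoBox JointPosition.monoBox_root
      fun s hs K hK L hL hKF => by
        simpa only [Set.mem_ofPred_eq, hunion s hs K hK L hL] using hKF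
  · exact JointPosition.isBanachMazurScheme_monoBox.mem_residual_of_mem_residual
      JointPosition.isBanachMazurScheme_box JointPosition.box_root
      fun s hs L hL K hK hLF => by
        simpa only [Set.mem_ofPred_eq, hunion s hs K hK L hL] using hLF

/-- **Main theorem.** Let `(X, ρ)` be a nonempty compact metric space without
isolated points, with `ρ(x,y) ≤ 1` for all `x, y`. A family `𝓕` of `F_σ` subsets of `X` is
`𝒦^ℕ`-residual if and only if it is `𝒦↗^ℕ`-residual: the set
`𝒦_𝓕^ℕ = {(Kₙ) ∈ 𝒦^ℕ : ⋃ₙ Kₙ ∈ 𝓕}` is residual in `𝒦^ℕ` if and only if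
`𝒦_𝓕^ℕ ∩ 𝒦↗^ℕ` is residual in the subspace `𝒦↗^ℕ` of increasing sequences. -/
theorem stmt_0 (X : Type*) [MetricSpace X] [CompactSpace X] [Nonempty X]
    (hdense : ∀ x : X, Filter.NeBot (𝓝[≠] x))
    (hbound : ∀ x y : X, dist x y ≤ 1)
    (F : Set (Set X))
    (hF : ∀ A ∈ F, ∃ C : ℕ → Set X, (∀ n, IsClosed (C n)) ∧ A = ⋃ n, C n) :
    {K : ℕ → Closeds X | (⋃ n, (K n : Set X)) ∈ F} ∈ residual (ℕ → Closeds X) ↔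
    {K : {K : ℕ → Closeds X // Monotone K} | (⋃ n, ((K : ℕ → Closeds X) n : Set X)) ∈ F} ∈
      residual {K : ℕ → Closeds X // Monotone K} :=
  stmt_0_general F
end

section
/- A typical F_σ subset of the interval [0,1] is Lebesgue null: the set of all sequences (K_n) of closed subsets of [0,1] such that ⋃_{n=1}^∞ K_n has Lebesgue measure zero is residual in 𝒦([0,1])^ℕ. -/
open TopologicalSpace MeasureTheory

/-!
For an outer regular measure `μ`, a compact set has open neighbourhoods of measure close to its
own, so `K ↦ μ K` is upper semicontinuous on the hyperspace of compact sets and the null compact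
sets form a `Gδ`. The finite sets are dense in the hyperspace and null when `μ` vanishes on
singletons, so this `Gδ` is residual. Coordinate projections are open, hence pull residual sets
back to residual sets, and a countable union of null sets is null.
-/

section Topology

theorem Iic_eq_biInter_Iio_of_dense {α : Type*} [TopologicalSpace α] [LinearOrder α]
    [OrderTopology α] [DenselyOrdered α] {s : Set α} (hs : Dense s) (a : α) :
    Set.Iic a = ⋂ b ∈ s ∩ Set.Ioi a, Set.Iio b := by
  refine Set.Subset.antisymm
    (fun x hx ↦ Set.mem_iInter₂.2 fun b hb ↦ lt_of_le_of_lt hx hb.2) fun x hx ↦ ?_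
  by_contra hax
  obtain ⟨b, hbs, hab, hbx⟩ := hs.exists_between (not_le.1 hax)
  exact (Set.mem_iInter₂.1 hx b ⟨hbs, hab⟩).not_gt hbx

theorem isGδ_preimage_Iic_of_upperSemicontinuous {X α : Type*} [TopologicalSpace X]
    [TopologicalSpace α] [LinearOrder α] [OrderTopology α] [DenselyOrdered α] [SeparableSpace α]
    {f : X → α} (hf : UpperSemicontinuous f) (a : α) : IsGδ (f ⁻¹' Set.Iic a) := by
  obtain ⟨s, hs_countable, hs_dense⟩ := exists_countable_dense α
  rw [Iic_eq_biInter_Iio_of_dense hs_dense a, Set.preimage_iInter₂]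
  exact .biInter_of_isOpen (hs_countable.mono Set.inter_subset_left)
    fun b _ ↦ hf.isOpen_preimage b

theorem eventually_residual_pi {ι : Type*} [Countable ι] {X : ι → Type*}
    [∀ i, TopologicalSpace (X i)] {p : ∀ i, X i → Prop} (h : ∀ i, ∀ᶠ x in residual (X i), p i x) :
    ∀ᶠ x in residual (∀ i, X i), ∀ i, p i (x i) :=
  eventually_countable_forall.2 fun i ↦
    (tendsto_residual_of_isOpenMap (continuous_apply i) (isOpenMap_eval i)).eventually (h i)

/-- The identification of compact sets (with the Vietoris topology) with closed sets (with the
topology of the Hausdorff uniformity) in a compact Hausdorff space. It transfers residuality from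
`Compacts X` to `Closeds X`. -/
def compactsHomeomorphCloseds (X : Type*) [UniformSpace X] [CompactSpace X] [T2Space X] :
    Compacts X ≃ₜ Closeds X :=
  Equiv.toHomeomorphOfIsInducing
    { toFun := Compacts.toCloseds
      invFun := fun K ↦ ⟨K, K.isClosed.isCompact⟩
      left_inv := fun _ ↦ rfl
      right_inv := fun _ ↦ rfl }
    Compacts.isEmbedding_toCloseds.isInducing

end Topology

section Measure

variable {X : Type*} [MeasurableSpace X]

theorem upperSemicontinuous_measure_compacts [TopologicalSpace X] (μ : Measure X)
    [μ.OuterRegular] : UpperSemicontinuous fun K : Compacts X ↦ μ K := by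
  intro K r hr
  obtain ⟨U, hKU, hU, hμU⟩ := (K : Set X).exists_isOpen_lt_of_lt r hr
  filter_upwards [(Compacts.isOpen_subsets_of_isOpen hU).mem_nhds hKU] with L hLU
  exact (measure_mono hLU).trans_lt hμU

theorem dense_compacts_measure_eq_zero [TopologicalSpace X] (μ : Measure X)
    [NullSingletonClass μ] : Dense {K : Compacts X | μ K = 0} :=
  Compacts.dense_setOfPred_finite.mono fun _ hK ↦ hK.countable.measure_zero μ

theorem eventually_residual_compacts_measure_eq_zero [TopologicalSpace X] (μ : Measure X)
    [μ.OuterRegular] [NullSingletonClass μ] : ∀ᶠ K : Compacts X in residual _, μ K = 0 := by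
  have hGδ : IsGδ {K : Compacts X | μ K ≤ 0} :=
    isGδ_preimage_Iic_of_upperSemicontinuous (upperSemicontinuous_measure_compacts μ) 0
  simp only [nonpos_iff_eq_zero] at hGδ
  exact residual_of_dense_Gδ hGδ (dense_compacts_measure_eq_zero μ)

theorem eventually_residual_closeds_measure_eq_zero [UniformSpace X] [CompactSpace X] [T2Space X]
    (μ : Measure X) [μ.OuterRegular] [NullSingletonClass μ] :
    ∀ᶠ K : Closeds X in residual _, μ K = 0 :=
  let e := (compactsHomeomorphCloseds X).symm
  (tendsto_residual_of_isOpenMap e.continuous e.isOpenMap).eventually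
    (eventually_residual_compacts_measure_eq_zero μ)

theorem stmt_5_general {ι : Type*} [Countable ι] [UniformSpace X] [CompactSpace X] [T2Space X]
    (μ : Measure X) [μ.OuterRegular] [NullSingletonClass μ] :
    {K : ι → Closeds X | μ (⋃ i, (K i : Set X)) = 0} ∈ residual (ι → Closeds X) := by
  filter_upwards [eventually_residual_pi fun _ : ι ↦ eventually_residual_closeds_measure_eq_zero μ]
    with K hK
  exact measure_iUnion_null hK

end Measure

/-- A typical `F_σ` subset of the interval `[0,1]` is Lebesgue null:
the set of all sequences `(Kₙ)` of closed subsets of `[0,1]` such that `⋃ₙ Kₙ` has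
Lebesgue measure zero is residual in `𝒦([0,1])^ℕ`. -/
theorem stmt_5 :
    {K : ℕ → Closeds ↥(Set.Icc (0:ℝ) 1) |
        volume (⋃ n, (K n : Set ↥(Set.Icc (0:ℝ) 1))) = 0} ∈
      residual (ℕ → Closeds ↥(Set.Icc (0:ℝ) 1)) :=
  stmt_5_general volume
end
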